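/- Let V be a vector space over ℝ, let n ≥ 1 be an integer, let T be a symmetric 2n-multilinear form on V, let q be a symmetric bilinear form on V, and let c > 0 be a real number. Assume the Fujiki-type identity T(η, η, …, η) = c · q(η,η)ⁿ holds for every η ∈ V. Let L, P ∈ V satisfy q(L,L) = 0 and q(P,L) > 0. Then there exists an integer k such that q(P − k·L, P − k·L) > 0 and T(P − k·L, …, P − k·L) ≤ C(2n,n) · T(P,…,P,L,…,L), where the last expression denotes T evaluated with n arguments equal to P and n arguments equal to L, and C(2n,n) is the binomial coefficient (2n choose n). -/

import Mathlib

open Polynomial in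
theorem fujiki_aux {V : Type*} [AddCommGroup V] [Module ℝ V] {n : ℕ}
    (T : MultilinearMap ℝ (fun _ : Fin (2 * n) => V) ℝ)
    (hT_symm : ∀ (σ : Equiv.Perm (Fin (2 * n))) (f : Fin (2 * n) → V),
      T (f ∘ σ) = T f)
    (a b c : ℝ) (L P : V)
    (h : ∀ t : ℝ, T (fun _ => t • L + P) = c * (a + b * t) ^ n) :
    c * b ^ n = (Nat.choose (2 * n) n : ℝ) * T (fun i => if (i : ℕ) < n then P else L) := by
  classical
  have hexp : ∀ t : ℝ, T (fun _ => t • L + P) =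
      ∑ s : Finset (Fin (2 * n)), T (s.piecewise (fun _ => L) (fun _ => P)) * t ^ s.card := by
    intro t
    have h1 := T.map_add_univ (fun _ => t • L) (fun _ => P)
    have h2 : ((fun _ => t • L) + (fun _ => P) : Fin (2 * n) → V) = fun _ => t • L + P := rfl
    rw [h2] at h1
    rw [h1]
    refine Finset.sum_congr rfl fun s _ => ?_
    have h3 := T.map_piecewise_smul (fun _ => t) (s.piecewise (fun _ => L) (fun _ => P)) s
    have h4 : s.piecewise (fun i => t • (s.piecewise (fun _ => L) (fun _ => P) : Fin (2 * n) → V) i)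
        (s.piecewise (fun _ => L) (fun _ => P)) = s.piecewise (fun _ => t • L) (fun _ => P) := by
      funext i
      by_cases hi : i ∈ s <;> simp [hi]
    rw [h4] at h3
    rw [h3, Finset.prod_const, smul_eq_mul, mul_comm]
  have hpoly : (∑ s : Finset (Fin (2 * n)),
      C (T (s.piecewise (fun _ => L) (fun _ => P))) * X ^ s.card : ℝ[X])
      = C c * (C b * X + C a) ^ n := by
    apply Polynomial.funext
    intro t
    have := hexp t
    rw [h t] at this
    simp only [eval_finsetSum, eval_mul, eval_C, eval_pow, eval_X, eval_add]
    rw [← this, add_comm]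
  have hco := congrArg (fun p => coeff p n) hpoly
  have hr : coeff ((C b * X + C a) ^ n) n = b ^ n := by
    have := coeff_pow_of_natDegree_le (p := C b * X + C a) (n := 1) (m := n) natDegree_linear_le
    simpa using this
  simp only [finsetSum_coeff, coeff_C_mul, hr, coeff_X_pow, mul_ite, mul_one, mul_zero] at hco
  rw [← hco, ← Finset.sum_filter]
  have hcard : (Finset.univ.filter fun s : Finset (Fin (2 * n)) => n = s.card).card
      = Nat.choose (2 * n) n := by
    have : (Finset.univ.filter fun s : Finset (Fin (2 * n)) => n = s.card)
        = Finset.powersetCard n Finset.univ := by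
      ext s
      simp [Finset.mem_powersetCard, eq_comm]
    rw [this, Finset.card_powersetCard, Finset.card_univ, Fintype.card_fin]
  rw [← hcard, ← nsmul_eq_mul]
  refine Finset.sum_eq_card_nsmul fun s hs => ?_
  have hs : n = s.card := by simpa using hs
  have hlt : (Finset.univ.filter fun i : Fin (2 * n) => ¬ (i : ℕ) < n).card = s.card := by
    have h1 := Finset.card_filter_add_card_filter_not (s := (Finset.univ : Finset (Fin (2 * n))))
      (fun i => (i : ℕ) < n)
    have h2 : (Finset.univ.filter fun i : Fin (2 * n) => (i : ℕ) < n).card = n := by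
      rw [Fin.card_filter_val_lt]
      omega
    rw [h2, Finset.card_univ, Fintype.card_fin] at h1
    omega
  let e := Finset.equivOfCardEq hlt.symm
  let σ : Equiv.Perm (Fin (2 * n)) := Equiv.extendSubtype e
  rw [← hT_symm σ (fun i => if (i : ℕ) < n then P else L)]
  congr 1
  funext i
  by_cases hi : i ∈ s
  · have := Equiv.extendSubtype_mem e i hi
    have h5 : ¬ ((σ i : Fin (2 * n)) : ℕ) < n := by simpa using this
    simp [hi, h5]
  · have := Equiv.extendSubtype_not_mem e i hi
    have h5 : ((σ i : Fin (2 * n)) : ℕ) < n := by simpa using this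
    simp [hi, h5]

/-- **Key estimate in Theorem 3.5.** Let `V` be a real vector space, `T` a symmetric
`2n`-multilinear form, `q` a symmetric bilinear form, `c > 0`, and suppose the
Fujiki-type identity `T(η,…,η) = c · q(η,η)ⁿ` holds.  If `q(L,L) = 0` and
`q(P,L) > 0`, then there is an integer `k` such that `q(P−kL, P−kL) > 0` and
`T(P−kL,…,P−kL) ≤ C(2n,n) · T(P,…,P,L,…,L)`. -/
theorem fujiki_exists_twist_bounded_top_intersection
    {V : Type*} [AddCommGroup V] [Module ℝ V] {n : ℕ} (hn : 1 ≤ n)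
    (T : MultilinearMap ℝ (fun _ : Fin (2 * n) => V) ℝ)
    (hT_symm : ∀ (σ : Equiv.Perm (Fin (2 * n))) (f : Fin (2 * n) → V),
      T (f ∘ σ) = T f)
    (q : LinearMap.BilinForm ℝ V)
    (hq_symm : ∀ x y : V, q x y = q y x)
    (c : ℝ) (hc : 0 < c)
    (hFujiki : ∀ η : V, T (fun _ => η) = c * (q η η) ^ n)
    (L P : V) (hL : q L L = 0) (hPL : 0 < q P L) :
    ∃ k : ℤ, 0 < q (P - (k : ℝ) • L) (P - (k : ℝ) • L) ∧
      T (fun _ => P - (k : ℝ) • L)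
        ≤ (Nat.choose (2 * n) n : ℝ) * T (fun i => if (i : ℕ) < n then P else L) := by
  have hexp : ∀ t : ℝ, q (t • L + P) (t • L + P) = q P P + 2 * q P L * t := by
    intro t
    simp only [map_add, map_smul, LinearMap.add_apply, LinearMap.smul_apply, smul_eq_mul, hL,
      hq_symm L P]
    ring
  have key := fujiki_aux T hT_symm (q P P) (2 * q P L) c L P
    (fun t => by rw [hFujiki, hexp])
  rw [← key]
  have hk : ∀ k : ℤ, P - (k : ℝ) • L = (-(k : ℝ)) • L + P := by
    intro k
    rw [neg_smul]
    abel
  have h2 : 0 < 2 * q P L := by linarith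
  refine ⟨⌈q P P / (2 * q P L)⌉ - 1, ?_⟩
  rw [hFujiki, hk, hexp]
  have h3 := Int.le_ceil (q P P / (2 * q P L))
  have h4 := Int.ceil_lt_add_one (q P P / (2 * q P L))
  have h5 : q P P = 2 * q P L * (q P P / (2 * q P L)) := by field_simp
  push_cast
  generalize (⌈q P P / (2 * q P L)⌉ : ℝ) = m at *
  generalize q P P / (2 * q P L) = r at *
  rw [h5]
  have h6 : 0 < 2 * q P L * r + 2 * q P L * -(m - 1) := by nlinarith
  refine ⟨h6, ?_⟩
  refine mul_le_mul_of_nonneg_left (pow_le_pow_left₀ h6.le ?_ n) hc.le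
  nlinarith
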